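/- For every k ∈ [K], the dimension of the F-linear span of { a_V : V an S-element subset of [K] \ {k} } is at most the binomial coefficient C(K−2, S−1). -/

import Mathlib

/-- The `i`-th smallest element (1-indexed) of a finite set of naturals,
i.e. `V(i)` for a finite set `V` of integers. -/
def nthSmallest (V : Finset ℕ) (i : ℕ) : ℕ :=
  (V.sort (· ≤ ·)).getD (i - 1) 0

/-!
Regard `a` as a cochain and write `δ` for the simplicial coboundary. The hypothesis says that
`a = δ b` on the `S`-element subsets of `{2, …, K}`, where `b U = a ({1} ∪ U)`. Since `δ (δ b) = 0`,
the value of `δ a` on `{2} ∪ V` vanishes for `V ⊆ {3, …, K}`, which is the same relation with `2` in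
place of `1`. So if `k ≠ 1` the pivot `1`, and if `k = 1` the pivot `2`, is such that the vectors
`a_V` with `V` containing it generate the span; there is one of them for each choice of the `S - 1`
other elements of `V` among `K - 2` points.
-/

section AlternatingSum

variable {α M : Type*} [LinearOrder α] [AddCommGroup M]

/-- The alternating sum `f (V(1)) - f (V(2)) + ⋯` of the values of `f` along the increasing
enumeration of `V`; the sign of `f x` is read off from the number of elements of `V` below `x`. -/
def alternatingSum (f : α → M) (V : Finset α) : M :=
  ∑ x ∈ V, (-1 : ℤ) ^ (V.filter (· < x)).card • f x

theorem alternatingSum_congr {f g : α → M} {V : Finset α} (h : ∀ x ∈ V, f x = g x) :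
    alternatingSum f V = alternatingSum g V :=
  Finset.sum_congr rfl fun x hx => by rw [h x hx]

theorem alternatingSum_sub (f g : α → M) (V : Finset α) :
    alternatingSum (fun x => f x - g x) V = alternatingSum f V - alternatingSum g V := by
  simp only [alternatingSum, smul_sub, Finset.sum_sub_distrib]

theorem alternatingSum_insert {q : α} {V : Finset α} (hq : ∀ x ∈ V, q < x) (f : α → M) :
    alternatingSum f (insert q V) = f q - alternatingSum f V := by
  have hqV : q ∉ V := fun h => (hq q h).false
  have hbelow : V.filter (· < q) = ∅ := Finset.filter_false_of_mem fun x hx => (hq x hx).not_gt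
  rw [alternatingSum, Finset.sum_insert hqV, sub_eq_add_neg, alternatingSum,
    ← Finset.sum_neg_distrib]
  congr 1
  · simp [Finset.filter_insert, hbelow]
  · refine Finset.sum_congr rfl fun x hx => ?_
    rw [Finset.filter_insert, if_pos (hq x hx), Finset.card_insert_of_notMem (by simp [hqV]),
      pow_succ, mul_neg_one, neg_smul]

theorem alternatingSum_mem {σ : Type*} [SetLike σ M] [AddSubgroupClass σ M] {N : σ} {f : α → M}
    {V : Finset α} (h : ∀ x ∈ V, f x ∈ N) : alternatingSum f V ∈ N :=
  sum_mem fun x hx => zsmul_mem (h x hx) _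

end AlternatingSum

section NthSmallest

theorem nthSmallest_insert_one {q : ℕ} {V : Finset ℕ} (hq : ∀ x ∈ V, q < x) :
    nthSmallest (insert q V) 1 = q := by
  rw [nthSmallest, Finset.sort_insert (· ≤ ·) (fun x hx => (hq x hx).le) fun h => (hq q h).false]
  rfl

theorem nthSmallest_insert_add_two {q : ℕ} {V : Finset ℕ} (hq : ∀ x ∈ V, q < x) (i : ℕ) :
    nthSmallest (insert q V) (i + 2) = nthSmallest V (i + 1) := by
  rw [nthSmallest, Finset.sort_insert (· ≤ ·) (fun x hx => (hq x hx).le) fun h => (hq q h).false]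
  rfl

theorem sum_range_nthSmallest (R : Type*) {M : Type*} [Ring R] [AddCommGroup M] [Module R M]
    (f : ℕ → M) (V : Finset ℕ) :
    ∑ i ∈ Finset.range V.card, (-1 : R) ^ i • f (nthSmallest V (i + 1)) = alternatingSum f V := by
  induction V using Finset.induction_on_min with
  | empty => rfl
  | insert q V hq ih =>
    rw [Finset.card_insert_of_notMem fun h => (hq q h).false, Finset.sum_range_succ',
      alternatingSum_insert hq, ← ih, sub_eq_neg_add, ← Finset.sum_neg_distrib]
    simp only [zero_add, nthSmallest_insert_one hq, nthSmallest_insert_add_two hq, pow_succ,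
      mul_neg_one, neg_smul, pow_zero, one_smul, add_assoc, Nat.reduceAdd]

theorem sum_Icc_nthSmallest (R : Type*) {M : Type*} [Ring R] [AddCommGroup M] [Module R M]
    (f : ℕ → M) (V : Finset ℕ) :
    ∑ i ∈ Finset.Icc 1 V.card, (-1 : R) ^ (i - 1) • f (nthSmallest V i) = alternatingSum f V := by
  rw [← sum_range_nthSmallest R, ← Finset.Ico_succ_right_eq_Icc, Finset.sum_Ico_eq_sum_range]
  simp only [Nat.succ_eq_succ, Nat.succ_eq_add_one, Nat.add_sub_cancel, add_comm 1]

end NthSmallest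

section Coboundary

variable {α M : Type*} [LinearOrder α] [AddCommGroup M]

/-- The simplicial coboundary of a cochain `c`, with finite sets as simplices:
`δ c V = c (V \ {V(1)}) - c (V \ {V(2)}) + ⋯`. -/
def coboundary (c : Finset α → M) (V : Finset α) : M :=
  alternatingSum (fun x => c (V.erase x)) V

theorem coboundary_insert {q : α} {V : Finset α} (hq : ∀ x ∈ V, q < x) (c : Finset α → M) :
    coboundary c (insert q V) = c V - coboundary (fun U => c (insert q U)) V := by
  rw [coboundary, alternatingSum_insert hq, Finset.erase_insert fun h => (hq q h).false,
    coboundary]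
  congr 1
  exact alternatingSum_congr fun x hx => by rw [Finset.erase_insert_of_ne (hq x hx).ne]

theorem coboundary_coboundary (c : Finset α → M) (V : Finset α) :
    coboundary (coboundary c) V = 0 := by
  induction V using Finset.induction_on_min generalizing c with
  | empty => rfl
  | insert q V hq ih =>
    have hlink : coboundary (fun U => coboundary c (insert q U)) V = coboundary c V :=
      calc coboundary (fun U => coboundary c (insert q U)) V
        _ = coboundary (fun U => c U - coboundary (fun W => c (insert q W)) U) V :=
          alternatingSum_congr fun x _ =>
            coboundary_insert (fun y hy => hq y (Finset.mem_of_mem_erase hy)) c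
        _ = coboundary c V - coboundary (coboundary fun W => c (insert q W)) V :=
          alternatingSum_sub _ _ V
        _ = coboundary c V := by rw [ih, sub_zero]
    rw [coboundary_insert hq, hlink, sub_self]

/-- The relation `a V = ∑ i, (-1) ^ (i - 1) • a ((V \ {V(i)}) ∪ {p})` for all `n`-element subsets
`V` of `G`, which expresses `a` there through its values on sets containing the pivot `p`. -/
def ExpandsAlong (a : Finset α → M) (p : α) (G : Finset α) (n : ℕ) : Prop :=
  ∀ V ⊆ G, V.card = n → a V = coboundary (fun U => a (insert p U)) V

namespace ExpandsAlong

variable {a : Finset α → M} {p : α} {G : Finset α} {n : ℕ}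

theorem mono {H : Finset α} (h : ExpandsAlong a p G n) (hHG : H ⊆ G) : ExpandsAlong a p H n :=
  fun V hV => h V (hV.trans hHG)

theorem coboundary_eq_zero (h : ExpandsAlong a p G n) {W : Finset α} (hW : W ⊆ G)
    (hcard : W.card = n + 1) : coboundary a W = 0 :=
  calc coboundary a W
    _ = coboundary (coboundary fun U => a (insert p U)) W :=
      alternatingSum_congr fun x hx => h _ ((W.erase_subset x).trans hW) <| by
        rw [Finset.card_erase_of_mem hx, hcard, Nat.add_sub_cancel]
    _ = 0 := coboundary_coboundary _ W

theorem change_pivot {q : α} (h : ExpandsAlong a p (insert q G) n) (hq : ∀ x ∈ G, q < x) :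
    ExpandsAlong a q G n := fun V hV hcard => by
  have hqV : ∀ x ∈ V, q < x := fun x hx => hq x (hV hx)
  have hcocycle : coboundary a (insert q V) = 0 :=
    h.coboundary_eq_zero (Finset.insert_subset_insert q hV) <| by
      rw [Finset.card_insert_of_notMem fun hmem => (hqV q hmem).false, hcard]
  rwa [coboundary_insert hqV, sub_eq_zero] at hcocycle

variable {R : Type*} [Ring R] [Module R M]

theorem span_le (h : ExpandsAlong a p G (n + 1)) :
    Submodule.span R {v | ∃ V ⊆ insert p G, V.card = n + 1 ∧ a V = v} ≤
      Submodule.span R {v | ∃ U ⊆ G, U.card = n ∧ a (insert p U) = v} := by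
  rw [Submodule.span_le]
  rintro _ ⟨V, hV, hcard, rfl⟩
  have card_erase : ∀ x ∈ V, (V.erase x).card = n := fun x hx => by
    rw [Finset.card_erase_of_mem hx, hcard, Nat.add_sub_cancel]
  by_cases hp : p ∈ V
  · exact Submodule.subset_span
      ⟨V.erase p, Finset.subset_insert_iff.1 hV, card_erase p hp, by rw [Finset.insert_erase hp]⟩
  · have hVG : V ⊆ G := (Finset.subset_insert_iff_of_notMem hp).1 hV
    rw [h V hVG hcard]
    exact alternatingSum_mem fun x hx => Submodule.subset_span
      ⟨V.erase x, (V.erase_subset x).trans hVG, card_erase x hx, rfl⟩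

theorem finrank_span_le [StrongRankCondition R] (h : ExpandsAlong a p G (n + 1)) :
    Module.finrank R (Submodule.span R {v | ∃ V ⊆ insert p G, V.card = n + 1 ∧ a V = v}) ≤
      G.card.choose n := by
  classical
  set T : Finset M := (G.powersetCard n).image fun U => a (insert p U)
  have hT : {v | ∃ U ⊆ G, U.card = n ∧ a (insert p U) = v} = (T : Set M) := by
    ext v
    simp only [T, Set.mem_ofPred_eq, Finset.mem_coe, Finset.mem_image, Finset.mem_powersetCard,
      and_assoc]
  calc Module.finrank R (Submodule.span R {v | ∃ V ⊆ insert p G, V.card = n + 1 ∧ a V = v})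
    _ ≤ Module.finrank R (Submodule.span R (T : Set M)) :=
      Submodule.finrank_mono (hT ▸ h.span_le)
    _ ≤ T.card := finrank_span_finset_le_card T
    _ ≤ (G.powersetCard n).card := Finset.card_image_le
    _ = G.card.choose n := G.card_powersetCard n

end ExpandsAlong

theorem expandsAlong_iff_nthSmallest (R : Type*) [Ring R] [Module R M] {a : Finset ℕ → M} {p : ℕ}
    {G : Finset ℕ} {n : ℕ} :
    ExpandsAlong a p G n ↔ ∀ V ⊆ G, V.card = n →
      a V = ∑ i ∈ Finset.Icc 1 n,
        (-1 : R) ^ (i - 1) • a (insert p (V.erase (nthSmallest V i))) := by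
  refine forall₃_congr fun V _ hcard => ?_
  subst hcard
  rw [sum_Icc_nthSmallest R fun x => a (insert p (V.erase x)), coboundary]

theorem span_dim_le_general {R : Type*} [Ring R] [StrongRankCondition R] [Module R M]
    {a : Finset α → M} {p : α} {G : Finset α} {n : ℕ} (ha : ExpandsAlong a p G (n + 1))
    (hp : p ∉ G) (hG : G.Nonempty) {k : α} (hk : k ∈ insert p G) :
    Module.finrank R
        (Submodule.span R {v | ∃ V ⊆ (insert p G).erase k, V.card = n + 1 ∧ a V = v}) ≤
      (G.card - 1).choose n := by
  rcases Finset.mem_insert.1 hk with rfl | hkG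
  · set q := G.min' hG
    have hqG : q ∈ G := G.min'_mem hG
    have hexp : ExpandsAlong a q (G.erase q) (n + 1) :=
      ExpandsAlong.change_pivot (by rwa [Finset.insert_erase hqG]) fun _ =>
        G.min'_lt_of_mem_erase_min' hG
    rw [Finset.erase_insert hp, ← Finset.card_erase_of_mem hqG]
    have hdim := hexp.finrank_span_le (R := R)
    rwa [Finset.insert_erase hqG] at hdim
  · rw [Finset.erase_insert_of_ne (ne_of_mem_of_not_mem hkG hp).symm,
      ← Finset.card_erase_of_mem hkG]
    exact (ha.mono (G.erase_subset k)).finrank_span_le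

end Coboundary

/-- For every `k ∈ [K]`, the dimension of the span of
`{a_V : V` an `S`-element subset of `[K] \ {k}}` is at most `C(K−2, S−1)`. -/
theorem span_dim_le
    (K S : ℕ) (hS : 2 ≤ S) (hSK : S ≤ K)
    (F : Type*) [Field F] (M : Type*) [AddCommGroup M] [Module F M]
    (a : Finset ℕ → M)
    (ha : ∀ V : Finset ℕ, V ⊆ Finset.Icc 2 K → V.card = S →
      a V = ∑ i ∈ Finset.Icc 1 S,
        ((-1 : F) ^ (i - 1)) • a (insert 1 (V.erase (nthSmallest V i))))
    (k : ℕ) (hk : k ∈ Finset.Icc 1 K) :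
    Module.finrank F
        ↥(Submodule.span F
          {v : M | ∃ V : Finset ℕ, V ⊆ (Finset.Icc 1 K).erase k ∧ V.card = S ∧ a V = v}) ≤
      (K - 2).choose (S - 1) := by
  obtain ⟨n, rfl⟩ := Nat.exists_eq_add_of_le' (one_le_two.trans hS)
  rw [← Finset.insert_Icc_add_one_left_eq_Icc (by omega : 1 ≤ K)] at hk ⊢
  simpa [Nat.sub_sub] using span_dim_le_general ((expandsAlong_iff_nthSmallest F).2 ha)
    (by simp) (Finset.nonempty_Icc.2 (by omega)) hk
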